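/- If rpl(T_i) = rpl(T_{i+1}) ≥ 2 and T_i can be derived from T_{i+1} by deleting a leaf and appending a leaf, then C(T_i, rpl(T_i)+1) can be derived from C(T_{i+1}, rpl(T_i)+1) by deleting a leaf and appending a leaf. -/

import Mathlib

/-- An ordered (plane) tree: a root together with the list of subtrees of its
children.  The children are listed **rightmost first** (so the head of the
list is the rightmost child). -/
inductive OTree : Type
  | node : List OTree → OTree

namespace OTree

-- Number of vertices of an ordered tree.
mutual
  def size : OTree → ℕ
    | .node ts => 1 + sizeAux ts
  def sizeAux : List OTree → ℕ
    | [] => 0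
    | t :: ts => size t + sizeAux ts
end

/-- `rpl T` is the number of edges of the rightmost path of `T`
(the path from the root that always follows the rightmost child). -/
def rpl : OTree → ℕ
  | .node [] => 0
  | .node (t :: _) => 1 + rpl t

/-- `p T` removes the rightmost leaf of `T` (the endpoint of the rightmost
path).  On the one-vertex tree it is the identity (junk value). -/
def p : OTree → OTree
  | .node [] => .node []
  | .node (.node [] :: ts) => .node ts
  | .node (.node (c :: cs) :: ts) => .node (p (.node (c :: cs)) :: ts)

/-- `C T i` appends a new leaf as the rightmost child of the vertex at
level `i` on the rightmost path of `T` (the root has level 1).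
Junk values are returned when `i = 0` or `i` exceeds `rpl T + 1`. -/
def C : OTree → ℕ → OTree
  | t, 0 => t
  | .node ts, 1 => .node (.node [] :: ts)
  | .node [], _ + 2 => .node []
  | .node (t :: ts), n + 2 => .node (C t (n + 1) :: ts)

/-- The number of children of the parent of the rightmost leaf
(junk value `0` on the one-vertex tree, which has no such parent). -/
def rmlParentDeg : OTree → ℕ
  | .node [] => 0
  | .node (.node [] :: ts) => ts.length + 1
  | .node (.node (c :: cs) :: _) => rmlParentDeg (.node (c :: cs))

/-- `T` has the pony-tail if the rightmost child of the root has exactly one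
child, which is a leaf. -/
def ponyTail : OTree → Prop
  | .node (.node [.node []] :: _) => True
  | _ => False

end OTree

/-- `AppendLeaf T T'` holds when `T'` is obtained from `T` by attaching one
new leaf to some vertex of `T`, at some position among its children. -/
inductive AppendLeaf : OTree → OTree → Prop
  | root (l r : List OTree) :
      AppendLeaf (.node (l ++ r)) (.node (l ++ OTree.node [] :: r))
  | child (l r : List OTree) (t t' : OTree) :
      AppendLeaf t t' → AppendLeaf (.node (l ++ t :: r)) (.node (l ++ t' :: r))

/-- `DelApp T T'` holds when `T'` can be obtained from `T` by deleting one
leaf and then appending one new leaf somewhere (delete-and-append a leaf). -/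
def DelApp (T T' : OTree) : Prop :=
  ∃ S : OTree, AppendLeaf S T ∧ AppendLeaf S T'

/-- `CopyingAt T T' j` : `T` is copying `T'` at level `j`, i.e. `T'` is
obtained from `T` by appending a new leaf which becomes the rightmost leaf of
`T'` (namely forming `C T j`, whose rightmost path has `j` edges) and then
removing some other leaf. -/
def CopyingAt (T T' : OTree) (j : ℕ) : Prop :=
  T ≠ T' ∧ 1 ≤ j ∧ j ≤ T.rpl + 1 ∧ T'.rpl = j ∧ AppendLeaf T' (T.C j)

/-- `T` is copying `T'`. -/
def Copying (T T' : OTree) : Prop := ∃ j : ℕ, CopyingAt T T' j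


theorem C_end_cons (t : OTree) (ts : List OTree) :
    (OTree.node (t :: ts)).C ((OTree.node (t :: ts)).rpl + 1) =
      .node (t.C (t.rpl + 1) :: ts) := by
  have e : (OTree.node (t :: ts)).rpl + 1 = t.rpl + 2 := by
    simp only [OTree.rpl]; omega
  rw [e, OTree.C]

theorem rpl_pos_of_append {S T : OTree} (h : AppendLeaf S T) : 1 ≤ T.rpl := by
  cases h with
  | root l r => cases l <;> simp [OTree.rpl]
  | child l r t t' h => cases l <;> simp [OTree.rpl]

theorem append_C_end : ∀ (n : ℕ) (T : OTree), T.rpl = n →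
    AppendLeaf T (T.C (n + 1))
  | 0, .node ts, _ => by
    rw [OTree.C]; exact AppendLeaf.root [] ts
  | n + 1, .node [], h => by simp [OTree.rpl] at h
  | n + 1, .node (t :: ts), h => by
    rw [OTree.C]
    have ht : t.rpl = n := by simp only [OTree.rpl] at h; omega
    exact AppendLeaf.child [] ts _ _ (append_C_end n t ht)

theorem append_cases {S T : OTree} (h : AppendLeaf S T) :
    (S.rpl = T.rpl ∧ AppendLeaf (S.C (S.rpl + 1)) (T.C (T.rpl + 1))) ∨
    (S.rpl ≠ T.rpl ∧ T = S.C T.rpl) := by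
  induction h with
  | root l r =>
    cases l with
    | nil =>
      by_cases hr : (OTree.node r).rpl = 1
      · left
        match r, hr with
        | .node [] :: r', _ =>
          refine ⟨by simp [OTree.rpl], ?_⟩
          simp only [List.nil_append]
          rw [C_end_cons, C_end_cons]
          exact AppendLeaf.root [_] r'
        | .node (a :: b) :: r', hr => simp [OTree.rpl] at hr
      · right
        refine ⟨by simpa [OTree.rpl] using hr, ?_⟩
        simp [OTree.rpl, OTree.C]
    | cons a l =>
      left
      refine ⟨by simp [OTree.rpl], ?_⟩
      simp only [List.cons_append]
      rw [C_end_cons, C_end_cons]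
      exact AppendLeaf.root (_ :: l) r
  | child l r t t' h ih =>
    cases l with
    | nil =>
      simp only [List.nil_append]
      rcases ih with ⟨h1, h3⟩ | ⟨h1, h3⟩
      · left
        refine ⟨by simp [OTree.rpl, h1], ?_⟩
        rw [C_end_cons, C_end_cons]
        exact AppendLeaf.child [] r _ _ h3
      · right
        refine ⟨by simpa [OTree.rpl] using h1, ?_⟩
        have hp := rpl_pos_of_append h
        obtain ⟨m, hm⟩ : ∃ m, t'.rpl = m + 1 := ⟨t'.rpl - 1, by omega⟩
        have e : (OTree.node (t' :: r)).rpl = m + 2 := by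
          simp only [OTree.rpl]; omega
        rw [e, OTree.C, ← hm, ← h3]
    | cons a l =>
      left
      refine ⟨by simp [OTree.rpl], ?_⟩
      simp only [List.cons_append]
      rw [C_end_cons, C_end_cons]
      exact AppendLeaf.child (_ :: l) r _ _ h

/-- If `rpl T₁ = rpl T₂ ≥ 2` and `T₁` can be derived from `T₂` by deleting a
leaf and appending a leaf, then `C T₁ (rpl T₁ + 1)` can be derived from
`C T₂ (rpl T₁ + 1)` by deleting a leaf and appending a leaf. -/
theorem stmt_13 (T₁ T₂ : OTree) (heq : T₁.rpl = T₂.rpl) (h2 : 2 ≤ T₁.rpl)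
    (h : DelApp T₂ T₁) :
    DelApp (T₂.C (T₁.rpl + 1)) (T₁.C (T₁.rpl + 1)) := by
  obtain ⟨S, hS2, hS1⟩ := h
  rcases append_cases hS2 with ⟨a, b⟩ | ⟨a, b⟩ <;>
    rcases append_cases hS1 with ⟨c, d⟩ | ⟨c, d⟩
  · exact ⟨_, by rw [heq]; exact b, d⟩
  · exact absurd (a.trans heq.symm) c
  · exact absurd (c.trans heq) a
  · have e : T₂ = T₁ := by rw [b, ← heq, ← d]
    subst e
    exact ⟨T₂, append_C_end _ _ rfl, append_C_end _ _ rfl⟩
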